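/- Let p be an odd prime, r ≥ 2 an integer, and K an abelian number field of conductor p^r, of degree n over ℚ and with D_K the absolute value of the discriminant of K. Then M(K) ≤ (3^{-2/3})^n · √(D_K). -/

import Mathlib

open NumberField

/-- The Euclidean minimum of a number field `K`:
`M(K) = sup_{x ∈ K} inf_{c ∈ O_K} |N_{K/ℚ}(x − c)|`. -/
noncomputable def euclideanMinimum (K : Type*) [Field K] [NumberField K] : ℝ :=
  ⨆ x : K, ⨅ c : 𝓞 K, |((Algebra.norm ℚ (x - (c : K)) : ℚ) : ℝ)|

/-- A number field `K` has conductor `f` if `f` is the smallest positive integer such that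
`K` embeds into the `f`-th cyclotomic field `ℚ(ζ_f)`.  (Such a `K` is automatically an
abelian extension of `ℚ`.) -/
def HasConductor (K : Type*) [Field K] [NumberField K] (f : ℕ+) : Prop :=
  Nonempty (K →ₐ[ℚ] CyclotomicField f ℚ) ∧
    ∀ m : ℕ+, Nonempty (K →ₐ[ℚ] CyclotomicField m ℚ) → f ≤ m

section

lemma em_num_aux (p : ℕ) (hp : 7 ≤ p) : 81 ^ p * p ^ 6 ≤ 512 ^ p := by
  induction p, hp using Nat.le_induction with
  | base => norm_num
  | succ n hn ih =>
    have h1 : ((n + 1) * 7) ^ 6 ≤ (8 * n) ^ 6 := Nat.pow_le_pow_left (by omega) 6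
    have h2 : (n + 1) ^ 6 * 117649 ≤ 262144 * n ^ 6 := by
      rw [mul_pow, mul_pow] at h1; norm_num at h1; exact h1
    have h3 : 81 * (n + 1) ^ 6 ≤ 512 * n ^ 6 := by omega
    calc 81 ^ (n+1) * (n+1) ^ 6 = 81 ^ n * (81 * (n+1)^6) := by ring
      _ ≤ 81 ^ n * (512 * n ^ 6) := Nat.mul_le_mul_left _ h3
      _ = 512 * (81 ^ n * n ^ 6) := by ring
      _ ≤ 512 * 512 ^ n := Nat.mul_le_mul_left _ ih
      _ = _ := by ring

/-- From a `c`-th power estimate. -/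
lemma em_num_red (p r N u c d : ℕ) (hp : 0 < p) (hc : c ≠ 0)
    (h1 : c * (u + N) ≤ d * N) (h2 : 81 ^ ((p - 1) * c) * p ^ (3 * d) ≤ 512 ^ ((p - 1) * c)) :
    (p ^ r - u) ^ (3 * (N * (p - 1))) * 81 ^ (N * (p - 1)) * p ^ (3 * (u + N)) ≤
      512 ^ (N * (p - 1)) * p ^ (3 * r * (N * (p - 1))) := by
  have h3 : 81 ^ (N * (p - 1)) * p ^ (3 * (u + N)) ≤ 512 ^ (N * (p - 1)) := by
    refine (Nat.pow_le_pow_iff_left hc).mp ?_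
    calc (81 ^ (N * (p - 1)) * p ^ (3 * (u + N))) ^ c
        = 81 ^ (N * ((p - 1) * c)) * p ^ (3 * (c * (u + N))) := by
          rw [mul_pow, ← pow_mul, ← pow_mul]; congr 2 <;> ring
      _ ≤ 81 ^ (N * ((p - 1) * c)) * p ^ (3 * (d * N)) := by
          gcongr
      _ = (81 ^ ((p - 1) * c) * p ^ (3 * d)) ^ N := by
          rw [mul_pow, ← pow_mul, ← pow_mul]; congr 2 <;> ring
      _ ≤ (512 ^ ((p - 1) * c)) ^ N := Nat.pow_le_pow_left h2 _
      _ = (512 ^ (N * (p - 1))) ^ c := by rw [← pow_mul, ← pow_mul]; congr 1; ring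
  calc (p ^ r - u) ^ (3 * (N * (p - 1))) * 81 ^ (N * (p - 1)) * p ^ (3 * (u + N))
      ≤ (p ^ r) ^ (3 * (N * (p - 1))) * 81 ^ (N * (p - 1)) * p ^ (3 * (u + N)) := by
        gcongr; omega
    _ = (p ^ r) ^ (3 * (N * (p - 1))) * (81 ^ (N * (p - 1)) * p ^ (3 * (u + N))) := by ring
    _ ≤ (p ^ r) ^ (3 * (N * (p - 1))) * 512 ^ (N * (p - 1)) := Nat.mul_le_mul_left _ h3
    _ = _ := by rw [← pow_mul, mul_comm]; congr 2; ring

lemma em_num (p r u : ℕ) (hp : p.Prime) (hodd : Odd p) (hr : 2 ≤ r) (hu : u ≤ p - 2) :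
    (p ^ r - u) ^ (3 * (p ^ (r - 1) * (p - 1))) * 81 ^ (p ^ (r - 1) * (p - 1)) *
      p ^ (3 * (u + p ^ (r - 1))) ≤
      512 ^ (p ^ (r - 1) * (p - 1)) * p ^ (3 * r * (p ^ (r - 1) * (p - 1))) := by
  have hp2 := hp.two_le
  obtain ⟨t, rfl⟩ : ∃ t, r = t + 2 := ⟨r - 2, by omega⟩
  rw [show t + 2 - 1 = t + 1 by omega]
  have hN : p ^ (t + 1) = p ^ t * p := pow_succ _ _
  have ht : 0 < p ^ t := pow_pos hp.pos t
  by_cases h7 : 7 ≤ p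
  · refine em_num_red p (t + 2) _ u p (2 * (p - 1)) hp.pos hp.ne_zero ?_ ?_
    · have h1 : p * u ≤ p ^ (t + 1) * (p - 2) := by
        rw [hN, mul_assoc]
        calc p * u ≤ p * (p - 2) := Nat.mul_le_mul_left _ hu
          _ ≤ p ^ t * (p * (p - 2)) := Nat.le_mul_of_pos_left _ ht
      obtain ⟨s, rfl⟩ : ∃ s, p = s + 2 := ⟨p - 2, by omega⟩
      simp only [Nat.add_sub_cancel, show s + 2 - 1 = s + 1 by omega] at h1 ⊢
      nlinarith
    · have := Nat.pow_le_pow_left (em_num_aux p h7) (p - 1)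
      rw [mul_pow, ← pow_mul, ← pow_mul, ← pow_mul] at this
      calc _ = 81 ^ (p * (p - 1)) * p ^ (6 * (p - 1)) := by congr 2 <;> ring
        _ ≤ _ := this
        _ = _ := by congr 1; ring
  · have : p = 3 ∨ p = 5 := by
      have h6 : p < 7 := by omega
      interval_cases p <;> first | omega | (exfalso; revert hodd; decide)
    rcases this with rfl | rfl
    · rcases Nat.eq_zero_or_pos t with rfl | htp
      · have : u = 0 ∨ u = 1 := by omega
        rcases this with rfl | rfl <;> norm_num
      · refine em_num_red 3 (t + 2) _ u 9 10 (by norm_num) (by norm_num) ?_ (by norm_num)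
        obtain ⟨s, rfl⟩ : ∃ s, t = s + 1 := ⟨t - 1, by omega⟩
        have : 0 < 3 ^ s := by positivity
        rw [pow_succ, pow_succ]; omega
    · rcases Nat.eq_zero_or_pos t with rfl | htp
      · have : u = 0 ∨ u = 1 ∨ u = 2 ∨ u = 3 := by omega
        rcases this with rfl | rfl | rfl | rfl <;> norm_num
      · refine em_num_red 5 (t + 2) _ u 2 3 (by norm_num) (by norm_num) ?_ (by norm_num)
        obtain ⟨s, rfl⟩ : ∃ s, t = s + 1 := ⟨t - 1, by omega⟩
        have : 0 < 5 ^ s := by positivity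
        rw [pow_succ, pow_succ]; omega

end

section

lemma em_sum_emod (M : ℕ) (n : ℤ) :
    ∑ k ∈ Finset.range M, (n - (k : ℤ)) % (M : ℤ) = ∑ k ∈ Finset.range M, (-(k : ℤ)) % (M : ℤ) := by
  have step : ∀ n : ℤ, ∑ k ∈ Finset.range M, (n + 1 - (k : ℤ)) % (M : ℤ)
      = ∑ k ∈ Finset.range M, (n - (k : ℤ)) % (M : ℤ) := by
    intro n
    rcases M with _ | M
    · simp
    · rw [Finset.sum_range_succ', Finset.sum_range_succ]
      congr 1
      · refine Finset.sum_congr rfl fun k _ => ?_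
        congr 1; push_cast; ring
      · rw [show n - (M : ℤ) = n + 1 - ((M + 1 : ℕ) : ℤ) by push_cast; ring, Int.sub_emod_right]
        simp
  induction n using Int.induction_on with
  | zero => simp
  | succ n ih => rw [step, ih]
  | pred n ih => rw [← ih, ← step]; simp

lemma em_pair (M : ℕ) (hM : 0 < M) (a b : ℤ) :
    ∑ k ∈ Finset.range M, ((((a - (k : ℤ)) % (M : ℤ) : ℤ) : ℝ) - (((b - (k : ℤ)) % (M : ℤ) : ℤ) : ℝ)) ^ 2
      ≤ if a = b then 0 else (M : ℝ) * ((M : ℝ) ^ 2 / 4) := by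
  split_ifs with h
  · subst h; simp
  · set d : ℤ := (a - b) % (M : ℤ) with hd
    have hM' : (0 : ℤ) < M := by exact_mod_cast hM
    have key : ∀ k : ℕ, ((((a - (k : ℤ)) % (M : ℤ) : ℤ) : ℝ) - (((b - (k : ℤ)) % (M : ℤ) : ℤ) : ℝ)) ^ 2
        = (2 * d - M) * ((((a - (k : ℤ)) % (M : ℤ) : ℤ) : ℝ) - (((b - (k : ℤ)) % (M : ℤ) : ℤ) : ℝ))
          + d * (M - d) := by
      intro k
      set A := (a - (k : ℤ)) % (M : ℤ) with hA
      set B := (b - (k : ℤ)) % (M : ℤ) with hB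
      have hA0 := Int.emod_nonneg (a - (k : ℤ)) hM'.ne'
      have hA1 := Int.emod_lt_of_pos (a - (k : ℤ)) hM'
      have hB0 := Int.emod_nonneg (b - (k : ℤ)) hM'.ne'
      have hB1 := Int.emod_lt_of_pos (b - (k : ℤ)) hM'
      rw [← hA] at hA0 hA1
      rw [← hB] at hB0 hB1
      have hAB : d = (A - B) % (M : ℤ) := by
        rw [hd, hA, hB, ← Int.sub_emod]; congr 1; ring
      have : A - B = d ∨ A - B = d - M := by
        rcases le_or_gt 0 (A - B) with h0 | h0
        · left; rw [hAB, Int.emod_eq_of_lt h0 (by omega)]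
        · right
          rw [hAB, ← Int.add_emod_right, Int.emod_eq_of_lt (by omega) (by omega)]; ring
      have h2 : ((A : ℝ) - B = d) ∨ ((A : ℝ) - B = d - M) := by
        rcases this with h | h
        · left; exact_mod_cast h
        · right; exact_mod_cast h
      rcases h2 with h | h <;> rw [h] <;> ring
    rw [Finset.sum_congr rfl fun k _ => key k, Finset.sum_add_distrib, ← Finset.mul_sum,
      Finset.sum_sub_distrib]
    have e := (em_sum_emod M a).trans (em_sum_emod M b).symm
    have e' : ∑ k ∈ Finset.range M, (((a - (k : ℤ)) % (M : ℤ) : ℤ) : ℝ) =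
      ∑ k ∈ Finset.range M, (((b - (k : ℤ)) % (M : ℤ) : ℤ) : ℝ) := by exact_mod_cast e
    rw [e', sub_self, mul_zero, zero_add, Finset.sum_const, Finset.card_range, nsmul_eq_mul]
    refine mul_le_mul_of_nonneg_left ?_ (by positivity)
    nlinarith [sq_nonneg ((M : ℝ) - 2 * d)]

lemma em_avg {ι : Type*} (s : Finset ι) (f g : ι → ℤ) (M : ℕ) (hM : 0 < M) :
    ∃ k : ℤ, ∑ i ∈ s, ((((f i - k) % (M : ℤ) : ℤ) : ℝ) - (((g i - k) % (M : ℤ) : ℤ) : ℝ)) ^ 2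
      ≤ (s.filter (fun i => f i ≠ g i)).card * ((M : ℝ) ^ 2 / 4) := by
  by_contra! hcon
  have h1 : ∑ k ∈ Finset.range M, ((s.filter (fun i => f i ≠ g i)).card * ((M : ℝ) ^ 2 / 4)) <
      ∑ k ∈ Finset.range M, ∑ i ∈ s,
        ((((f i - (k : ℤ)) % (M : ℤ) : ℤ) : ℝ) - (((g i - (k : ℤ)) % (M : ℤ) : ℤ) : ℝ)) ^ 2 :=
    Finset.sum_lt_sum_of_nonempty (by simpa using hM.ne') fun k _ => hcon k
  rw [Finset.sum_comm] at h1
  have h2 := Finset.sum_le_sum fun i (_ : i ∈ s) => em_pair M hM (f i) (g i)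
  have h3 : ∑ i ∈ s, (if f i = g i then (0 : ℝ) else (M : ℝ) * ((M : ℝ) ^ 2 / 4))
      = (s.filter (fun i => f i ≠ g i)).card * (M * ((M : ℝ) ^ 2 / 4)) := by
    rw [Finset.card_eq_sum_ones, Nat.cast_sum, Finset.sum_mul, Finset.sum_filter]
    refine Finset.sum_congr rfl fun i _ => ?_
    by_cases h : f i = g i <;> simp [h]
  rw [Finset.sum_const, Finset.card_range, nsmul_eq_mul] at h1
  rw [h3] at h2
  nlinarith

end

section
open scoped ComplexConjugate

/-- kernel of multiplication by `p` on `ZMod (p^r)` has `p` elements -/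
lemma em_card_ker (p r : ℕ) [NeZero (p ^ r)] (hp : p.Prime) (hr : 1 ≤ r) :
    (Finset.univ.filter (fun b : ZMod (p ^ r) => (p : ZMod (p ^ r)) * b = 0)).card = p := by
  have hq : p ^ r = p ^ (r - 1) * p := by rw [← pow_succ]; congr 1; omega
  have hN : 0 < p ^ (r - 1) := pow_pos hp.pos _
  have : Finset.univ.filter (fun b : ZMod (p ^ r) => (p : ZMod (p ^ r)) * b = 0) =
      (Finset.range p).image (fun k : ℕ => ((p ^ (r - 1) * k : ℕ) : ZMod (p ^ r))) := by
    ext b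
    simp only [Finset.mem_filter, Finset.mem_univ, true_and, Finset.mem_image, Finset.mem_range]
    constructor
    · intro h
      have h1 : ((p * b.val : ℕ) : ZMod (p ^ r)) = 0 := by
        push_cast; rwa [ZMod.natCast_zmod_val]
      rw [ZMod.natCast_eq_zero_iff] at h1
      have h2 : p ^ (r - 1) * p ∣ b.val * p := by rw [← hq, mul_comm b.val]; exact h1
      obtain ⟨k, hk⟩ := Nat.dvd_of_mul_dvd_mul_right hp.pos h2
      refine ⟨k, ?_, by rw [← hk, ZMod.natCast_zmod_val]⟩
      have := ZMod.val_lt b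
      rw [hk] at this
      exact Nat.lt_of_mul_lt_mul_left (this.trans_eq hq)
    · rintro ⟨k, -, rfl⟩
      rw [← Nat.cast_mul, ZMod.natCast_eq_zero_iff]
      exact ⟨k, by rw [hq]; ring⟩
  rw [this, Finset.card_image_of_injOn, Finset.card_range]
  intro a ha b hb hab
  simp only [Finset.coe_range, Set.mem_Iio] at ha hb
  have hlt : ∀ a < p, p ^ (r - 1) * a < p ^ r := fun a ha => by
    conv_rhs => rw [hq]
    exact Nat.mul_lt_mul_of_pos_left ha hN
  have := (ZMod.natCast_eq_natCast_iff' _ _ _).mp hab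
  rw [Nat.mod_eq_of_lt (hlt a ha), Nat.mod_eq_of_lt (hlt b hb)] at this
  exact Nat.eq_of_mul_eq_mul_left hN this

lemma em_card_rel (p r : ℕ) [NeZero (p ^ r)] (hp : p.Prime) (hr : 1 ≤ r) (a : ZMod (p ^ r)) :
    (Finset.univ.filter (fun b : ZMod (p ^ r) => (p : ZMod (p ^ r)) * (b - a) = 0)).card = p := by
  refine Eq.trans ?_ (em_card_ker p r hp hr)
  refine Finset.card_bij (fun b _ => b - a) ?_ ?_ ?_
  · intro b hb; simpa using hb
  · intro b _ c _ h; simpa using h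
  · intro c hc; exact ⟨c + a, by simpa using hc, by simp⟩

lemma em_not_unit_iff (p r : ℕ) [NeZero (p ^ r)] (hp : p.Prime) (hr : 1 ≤ r) (a : ZMod (p ^ r)) :
    ¬ IsUnit a ↔ ∃ b, (p : ZMod (p ^ r)) * b = a := by
  rw [← ZMod.natCast_zmod_val a, ZMod.isUnit_iff_coprime, Nat.coprime_pow_right_iff (by omega),
    Nat.coprime_comm, hp.coprime_iff_not_dvd, not_not]
  constructor
  · rintro ⟨k, hk⟩; exact ⟨k, by rw [hk]; push_cast; ring⟩
  · rintro ⟨b, hb⟩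
    rw [ZMod.natCast_zmod_val] at hb
    have h1 : ((p * b.val : ℕ) : ZMod (p ^ r)) = (a.val : ℕ) := by
      push_cast; rw [ZMod.natCast_zmod_val, ZMod.natCast_zmod_val, hb]
    have h2 := (ZMod.natCast_eq_natCast_iff _ _ _).mp h1
    have h3 := h2.of_dvd (dvd_pow_self p (by omega : r ≠ 0))
    exact (Nat.modEq_zero_iff_dvd).mp (h3.symm.trans ((Nat.modEq_zero_iff_dvd).mpr ⟨_, rfl⟩))

lemma em_sum_units (p r : ℕ) [NeZero (p ^ r)] (hp : p.Prime) (hr : 1 ≤ r) (F : ZMod (p ^ r) → ℝ) :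
    (p : ℝ) * ∑ u : (ZMod (p ^ r))ˣ, F u = p * ∑ j, F j - ∑ j, F (p * j) := by
  classical
  have h1 : ∑ u : (ZMod (p ^ r))ˣ, F u = ∑ j ∈ Finset.univ.filter (fun j => IsUnit j), F j := by
    refine Finset.sum_bij (fun u _ => (u : ZMod (p ^ r))) ?_ ?_ ?_ ?_
    · intro u _; simp
    · intro u _ v _ h; exact Units.ext h
    · intro j hj
      obtain ⟨u, hu⟩ := (Finset.mem_filter.mp hj).2
      exact ⟨u, Finset.mem_univ _, hu⟩
    · intro _ _; rfl
  have h2 := Finset.sum_filter_add_sum_filter_not (Finset.univ : Finset (ZMod (p ^ r)))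
    (fun j => IsUnit j) F
  have h3 : ∑ j, F (p * j) = p * ∑ j ∈ Finset.univ.filter (fun j => ¬ IsUnit j), F j := by
    rw [Finset.mul_sum, ← Finset.sum_fiberwise_of_maps_to
      (t := Finset.univ.filter (fun j => ¬ IsUnit j)) (g := fun j : ZMod (p ^ r) => (p : ZMod (p ^ r)) * j)]
    · refine Finset.sum_congr rfl fun k hk => ?_
      rw [Finset.mem_filter, em_not_unit_iff p r hp hr] at hk
      obtain ⟨b, hb⟩ := hk.2
      have : ∀ j ∈ Finset.univ.filter (fun j : ZMod (p ^ r) => (p : ZMod (p ^ r)) * j = k),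
          F (p * j) = F k := fun j hj => by rw [(Finset.mem_filter.mp hj).2]
      rw [Finset.sum_congr rfl this, Finset.sum_const, nsmul_eq_mul]
      congr 2
      refine Eq.trans ?_ (em_card_rel p r hp hr b)
      congr 1
      ext j
      simp [mul_sub, sub_eq_zero, hb]
    · intro j _
      rw [Finset.mem_filter, em_not_unit_iff p r hp hr]
      exact ⟨Finset.mem_univ _, j, rfl⟩
  rw [h1, h3, ← h2]; ring

lemma em_parseval (q : ℕ) [NeZero q] (ψ : AddChar (ZMod q) ℂ) (hψ : ψ.IsPrimitive)
    (y : ZMod q → ℝ) (c : ZMod q) :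
    ∑ j, ‖∑ a, (y a : ℂ) * ψ (c * j * a)‖ ^ 2 =
      q * ∑ a, ∑ b, if c * (b - a) = 0 then y a * y b else 0 := by
  have key : ∑ j, ((‖∑ a, (y a : ℂ) * ψ (c * j * a)‖ ^ 2 : ℝ) : ℂ) =
      q * ∑ a, ∑ b, if c * (b - a) = 0 then (y a * y b : ℂ) else 0 := by
    have : ∀ j, ((‖∑ a, (y a : ℂ) * ψ (c * j * a)‖ ^ 2 : ℝ) : ℂ) =
        ∑ a, ∑ b, (y a * y b : ℂ) * ψ (j * (c * (b - a))) := by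
      intro j
      rw [Complex.ofReal_pow, ← Complex.conj_mul', map_sum, Finset.sum_mul_sum]
      refine Finset.sum_congr rfl fun a _ => Finset.sum_congr rfl fun b _ => ?_
      rw [map_mul, Complex.conj_ofReal, ← AddChar.map_neg_eq_conj,
        show j * (c * (b - a)) = -(c * j * a) + c * j * b by ring, AddChar.map_add_eq_mul]
      ring
    rw [Finset.sum_congr rfl fun j _ => this j, Finset.sum_comm, Finset.mul_sum]
    refine Finset.sum_congr rfl fun a _ => ?_
    rw [Finset.sum_comm, Finset.mul_sum]
    refine Finset.sum_congr rfl fun b _ => ?_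
    rw [← Finset.mul_sum, AddChar.sum_mulShift _ hψ]
    split_ifs <;> simp [ZMod.card, mul_comm]
  apply Complex.ofReal_injective
  push_cast
  push_cast at key
  rw [key]
  congr 1
  refine Finset.sum_congr rfl fun a _ => Finset.sum_congr rfl fun b _ => ?_
  split_ifs <;> simp

lemma em_trace_form (p r : ℕ) [NeZero (p ^ r)] (hp : p.Prime) (hr : 1 ≤ r)
    (ψ : AddChar (ZMod (p ^ r)) ℂ) (hψ : ψ.IsPrimitive) (y : ZMod (p ^ r) → ℝ) :
    ∑ u : (ZMod (p ^ r))ˣ, ‖∑ a, (y a : ℂ) * ψ (u * a)‖ ^ 2 =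
      (p : ℝ) ^ (r - 1) / 2 * ∑ a, ∑ b, if (p : ZMod (p ^ r)) * (b - a) = 0 then (y a - y b) ^ 2 else 0 := by
  have hp0 : (p : ℝ) ≠ 0 := by exact_mod_cast hp.ne_zero
  have h0 := em_sum_units p r hp hr (fun j => ‖∑ a, (y a : ℂ) * ψ (j * a)‖ ^ 2)
  have h1 := em_parseval (p ^ r) ψ hψ y 1
  have h2 := em_parseval (p ^ r) ψ hψ y p
  simp only [one_mul] at h1
  rw [h1, h2] at h0
  have h3 : ∑ a, ∑ b, (if b - a = 0 then y a * y b else 0) = ∑ a, y a ^ 2 := by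
    refine Finset.sum_congr rfl fun a _ => ?_
    simp [sub_eq_zero, pow_two]
  have h4 : ∑ a, ∑ b, (if (p : ZMod (p ^ r)) * (b - a) = 0 then y a ^ 2 else 0) = p * ∑ a, y a ^ 2 := by
    rw [Finset.mul_sum]
    refine Finset.sum_congr rfl fun a _ => ?_
    rw [← Finset.sum_filter, Finset.sum_const, em_card_rel p r hp hr, nsmul_eq_mul]
  have h5 : ∑ a, ∑ b, (if (p : ZMod (p ^ r)) * (b - a) = 0 then y b ^ 2 else 0) = p * ∑ a, y a ^ 2 := by
    rw [Finset.sum_comm, ← h4]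
    refine Finset.sum_congr rfl fun a _ => Finset.sum_congr rfl fun b _ => ?_
    have : (p : ZMod (p ^ r)) * (a - b) = 0 ↔ (p : ZMod (p ^ r)) * (b - a) = 0 := by
      rw [← neg_sub b a, mul_neg, neg_eq_zero]
    simp only [this]
  have h6 : ∑ a, ∑ b, (if (p : ZMod (p ^ r)) * (b - a) = 0 then (y a - y b) ^ 2 else 0) =
      2 * (p * ∑ a, y a ^ 2) - 2 *
        ∑ a, ∑ b, (if (p : ZMod (p ^ r)) * (b - a) = 0 then y a * y b else 0) := by
    rw [two_mul]
    nth_rewrite 1 [← h4]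
    rw [← h5]
    simp only [Finset.mul_sum, ← Finset.sum_add_distrib, ← Finset.sum_sub_distrib]
    refine Finset.sum_congr rfl fun a _ => Finset.sum_congr rfl fun b _ => ?_
    split_ifs <;> ring
  rw [h3] at h0
  rw [h6]
  apply mul_left_cancel₀ hp0
  rw [h0]
  have : (p : ℝ) ^ r = p ^ (r - 1) * p := by rw [← pow_succ]; congr 1; omega
  push_cast
  rw [this]; ring

lemma em_count (p r : ℕ) [NeZero (p ^ r)] (hp : p.Prime) (hr : 1 ≤ r) (n : ZMod (p ^ r) → ℤ)
    (S : Finset (ZMod (p ^ r))) (hS : S.Nonempty)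
    (hinv : ∀ s ∈ S, ∀ a, n (s * a) = n a)
    (hS2 : ∀ s ∈ S, ∀ t ∈ S, s ≠ t → IsUnit (s - t)) :
    (Finset.univ.filter (fun x : ZMod (p ^ r) × ZMod (p ^ r) =>
      (p : ZMod (p ^ r)) * (x.2 - x.1) = 0 ∧ n x.1 ≠ n x.2)).card + (p - 1) * (S.card - 1)
      ≤ (p - 1) * p ^ r := by
  classical
  have hS1 : 1 ≤ S.card := hS.card_pos
  have h1 : (Finset.univ.filter (fun x : ZMod (p ^ r) × ZMod (p ^ r) =>
      (p : ZMod (p ^ r)) * (x.2 - x.1) = 0 ∧ n x.1 ≠ n x.2)).card =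
      ∑ a, (Finset.univ.filter (fun b : ZMod (p ^ r) =>
        (p : ZMod (p ^ r)) * (b - a) = 0 ∧ n a ≠ n b)).card := by
    simp only [Finset.card_filter]
    rw [Fintype.sum_prod_type]
  have h2 : (p - 1) * (S.card - 1) = ∑ a : ZMod (p ^ r),
      if (p : ZMod (p ^ r)) * a = 0 ∧ a ≠ 0 then S.card - 1 else 0 := by
    rw [← Finset.sum_filter, Finset.sum_const, smul_eq_mul]
    congr 1
    have : Finset.univ.filter (fun a : ZMod (p ^ r) => (p : ZMod (p ^ r)) * a = 0 ∧ a ≠ 0) =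
        (Finset.univ.filter (fun a : ZMod (p ^ r) => (p : ZMod (p ^ r)) * a = 0)).erase 0 := by
      ext a; simp [and_comm]
    rw [this, Finset.card_erase_of_mem (by simp), em_card_ker p r hp hr]
  have h3 : (p - 1) * p ^ r = ∑ a : ZMod (p ^ r), (p - 1) := by
    rw [Finset.sum_const, Finset.card_univ, ZMod.card, smul_eq_mul, mul_comm]
  rw [h1, h2, h3, ← Finset.sum_add_distrib]
  refine Finset.sum_le_sum fun a _ => ?_
  have h4 : (Finset.univ.filter (fun b : ZMod (p ^ r) =>
        (p : ZMod (p ^ r)) * (b - a) = 0 ∧ n a ≠ n b)).card + (Finset.univ.filter (fun b : ZMod (p ^ r) =>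
        (p : ZMod (p ^ r)) * (b - a) = 0 ∧ n a = n b)).card = p := by
    refine Eq.trans ?_ (em_card_rel p r hp hr a)
    rw [← Finset.card_filter_add_card_filter_not (s := Finset.univ.filter (fun b : ZMod (p ^ r) =>
        (p : ZMod (p ^ r)) * (b - a) = 0)) (fun b => n a ≠ n b), Finset.filter_filter, Finset.filter_filter]
    simp only [not_not, ne_eq]
  have h5 : 1 ≤ (Finset.univ.filter (fun b : ZMod (p ^ r) =>
        (p : ZMod (p ^ r)) * (b - a) = 0 ∧ n a = n b)).card :=
    Finset.card_pos.mpr ⟨a, by simp⟩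
  split_ifs with ha
  · have h6 : S.card ≤ (Finset.univ.filter (fun b : ZMod (p ^ r) =>
        (p : ZMod (p ^ r)) * (b - a) = 0 ∧ n a = n b)).card := by
      refine Finset.card_le_card_of_injOn (fun s => s * a) ?_ ?_
      · intro s hs
        have : (p : ZMod (p ^ r)) * (s * a - a) = (s - 1) * (p * a) := by ring
        simp [this, ha.1, hinv s hs]
      · intro s hs t ht hst
        by_contra hne
        have h7 : (s - t) * a = 0 := by
          simp only at hst
          rw [sub_mul, hst, sub_self]
        exact ha.2 ((hS2 s hs t ht hne).mul_right_eq_zero.mp h7)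
    omega
  · omega

end

section
open NumberField IsCyclotomicExtension.Rat

lemma em_cyc (n : ℕ) [NeZero n] : IsCyclotomicExtension {n} ℚ (CyclotomicField n ℚ) := by
  have h := CyclotomicField.isCyclotomicExtension n ℚ
  have e : (DivisionRing.toRatAlgebra : Algebra ℚ (CyclotomicField n ℚ)) = CyclotomicField.algebra n ℚ := Subsingleton.elim _ _
  rw [e]
  exact h

lemma em_not_dvd (p r : ℕ) [NeZero (p ^ r)] (hp : p.Prime) (hodd : Odd p) (hr : 2 ≤ r)
    (K L : Type*) [Field K] [NumberField K] [Field L] [NumberField L] [Algebra K L]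
    [IsCyclotomicExtension {p ^ r} ℚ L]
    (hK : ¬ Nonempty (K →ₐ[ℚ] CyclotomicField (p ^ (r - 1)) ℚ)) :
    ¬ p ∣ Nat.card Gal(L/K) := by
  intro hdvd
  have : Fact p.Prime := ⟨hp⟩
  have : NeZero (p ^ (r - 1)) := ⟨(pow_pos hp.pos _).ne'⟩
  have hp2 : p ≠ 2 := by rintro rfl; revert hodd; decide
  have : IsGalois ℚ L := IsCyclotomicExtension.isGalois {p ^ r} ℚ L
  obtain ⟨h, hh⟩ := exists_prime_orderOf_dvd_card' p hdvd
  set g : Gal(L/ℚ) := AlgEquiv.restrictScalarsHom ℚ h with hg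
  have hgo : orderOf g = p := by
    rw [hg, orderOf_injective _ (AlgEquiv.restrictScalarsHom_injective ℚ), hh]
  have : IsCyclic (ZMod (p ^ r))ˣ := ZMod.isCyclic_units_of_prime_pow p hp hp2 r
  have : IsCyclic Gal(L/ℚ) := isCyclic_of_injective (galEquivZMod (p ^ r) L).toMonoidHom (galEquivZMod (p ^ r) L).injective
  have hζ := IsCyclotomicExtension.zeta_spec (p ^ r) ℚ L
  set ζ := IsCyclotomicExtension.zeta (p ^ r) ℚ L
  have hζp : IsPrimitiveRoot (ζ ^ p) (p ^ (r - 1)) := by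
    refine hζ.pow (pow_pos hp.pos r) ?_
    rw [← pow_succ']; congr 1; omega
  let F := IntermediateField.adjoin ℚ {ζ ^ p}
  have hF : IsCyclotomicExtension {p ^ (r - 1)} ℚ F :=
    hζp.intermediateField_adjoin_isCyclotomicExtension ℚ
  have hcard : Nat.card F.fixingSubgroup = p := by
    rw [IsGalois.card_fixingSubgroup_eq_finrank]
    have h1 := Module.finrank_mul_finrank ℚ F L
    rw [IsCyclotomicExtension.Rat.finrank (p ^ (r - 1)) F, IsCyclotomicExtension.Rat.finrank (p ^ r) L,
      Nat.totient_prime_pow hp (by omega), Nat.totient_prime_pow hp (by omega)] at h1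
    have h2 : p ^ (r - 1) = p ^ (r - 1 - 1) * p := by rw [← pow_succ]; congr 1; omega
    rw [h2] at h1
    have h3 : 0 < p ^ (r - 1 - 1) * (p - 1) :=
      mul_pos (pow_pos hp.pos _) (by have := hp.two_le; omega)
    refine Nat.eq_of_mul_eq_mul_left h3 ?_
    rw [h1]; ring
  have hsub : F.fixingSubgroup ≤ Subgroup.zpowers g := by
    classical
    have : Fintype Gal(L/ℚ) := Fintype.ofFinite _
    have hle := IsCyclic.card_pow_eq_one_le (α := Gal(L/ℚ)) hp.pos
    have hz : (Finset.univ.filter (fun a => a ∈ Subgroup.zpowers g)) =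
        Finset.univ.filter (fun a : Gal(L/ℚ) => a ^ p = 1) := by
      refine Finset.eq_of_subset_of_card_le ?_ ?_
      · intro a ha
        simp only [Finset.mem_filter, Finset.mem_univ, true_and] at ha ⊢
        obtain ⟨k, rfl⟩ := Subgroup.mem_zpowers_iff.mp ha
        rw [← zpow_natCast, ← zpow_mul, mul_comm, zpow_mul, zpow_natCast, ← hgo, pow_orderOf_eq_one, one_zpow]
      · refine hle.trans ?_
        rw [← Fintype.card_subtype, ← Nat.card_eq_fintype_card]
        exact (hgo.symm.trans (Nat.card_zpowers g).symm).le
    intro τ hτ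
    have h1 : τ ^ p = 1 := by
      have := pow_card_eq_one' (x := (⟨τ, hτ⟩ : F.fixingSubgroup))
      rw [hcard] at this
      exact congrArg Subtype.val this
    have h2 : τ ∈ Finset.univ.filter (fun a : Gal(L/ℚ) => a ^ p = 1) := by simp [h1]
    rw [← hz] at h2
    exact (Finset.mem_filter.mp h2).2
  have hKF : ∀ x : K, algebraMap K L x ∈ F := by
    intro x
    rw [← IsGalois.fixedField_fixingSubgroup F, IntermediateField.mem_fixedField_iff]
    intro τ hτ
    obtain ⟨k, rfl⟩ := Subgroup.mem_zpowers_iff.mp (hsub hτ)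
    rw [hg, ← map_zpow]
    exact (h ^ k).commutes x
  have := em_cyc (p ^ (r - 1))
  have φ : F ≃ₐ[ℚ] CyclotomicField (p ^ (r - 1)) ℚ :=
    IsCyclotomicExtension.algEquiv {p ^ (r - 1)} ℚ F (CyclotomicField (p ^ (r - 1)) ℚ)
  let f : K →ₐ[ℚ] F := (IsScalarTower.toAlgHom ℚ K L).codRestrict F.toSubalgebra hKF
  exact hK ⟨(φ : F →ₐ[ℚ] _).comp f⟩

lemma em_unit (p r : ℕ) [NeZero (p ^ r)] (hp : p.Prime) (hr : 2 ≤ r)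
    (G : Type*) [Group G] [Finite G] (χ : G →* (ZMod (p ^ r))ˣ) (hχ : Function.Injective χ)
    (hG : ¬ p ∣ Nat.card G) (h : G) (hh : h ≠ 1) :
    IsUnit ((χ h : ZMod (p ^ r)) - 1) := by
  by_contra hnu
  have hdvd : (p : ZMod (p ^ r)) ∣ (χ h : ZMod (p ^ r)) - 1 := by
    set a := (χ h : ZMod (p ^ r)) - 1
    rw [← ZMod.natCast_zmod_val a, ZMod.isUnit_iff_coprime, Nat.coprime_pow_right_iff (by omega),
      Nat.coprime_comm, hp.coprime_iff_not_dvd, not_not] at hnu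
    obtain ⟨k, hk⟩ := hnu
    rw [← ZMod.natCast_zmod_val a, hk]; push_cast; exact Dvd.intro _ rfl
  have h1 := dvd_sub_pow_of_dvd_sub hdvd (r - 1)
  rw [show r - 1 + 1 = r by omega, ← Nat.cast_pow, ZMod.natCast_self, zero_dvd_iff, one_pow,
    sub_eq_zero, ← Units.val_pow_eq_pow_val, Units.val_eq_one, ← map_pow,
    map_eq_one_iff _ hχ] at h1
  have h2 : orderOf h ∣ p ^ (r - 1) := orderOf_dvd_of_pow_eq_one h1
  have h3 : orderOf h ∣ Nat.card G := orderOf_dvd_natCard h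
  have h4 : Nat.Coprime (p ^ (r - 1)) (Nat.card G) :=
    Nat.Coprime.pow_left _ ((hp.coprime_iff_not_dvd).mpr hG)
  exact hh (orderOf_eq_one_iff.mp (Nat.eq_one_of_dvd_coprimes h4 h2 h3))

end

section
open NumberField IsCyclotomicExtension.Rat
open Polynomial

lemma em_norm_sub (p r : ℕ) [NeZero (p ^ r)] (hp : p.Prime) (hp2 : p ≠ 2) (hr : 2 ≤ r)
    (L : Type*) [Field L] [NumberField L]
    [IsCyclotomicExtension {p ^ r} ℚ L] (ζ : L) (hζ : IsPrimitiveRoot ζ (p ^ r)) (g : Gal(L/ℚ))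
    (hg : IsUnit ((galEquivZMod (p ^ r) L g : ZMod (p ^ r)) - 1)) :
    |Algebra.norm ℚ (ζ - g ζ)| = p := by
  have : Fact p.Prime := ⟨hp⟩
  have h1 := galEquivZMod_apply_of_pow_eq (p ^ r) L g hζ.pow_eq_one
  set a : ZMod (p ^ r) := (galEquivZMod (p ^ r) L g : ZMod (p ^ r)) with ha
  have h2 : g ζ = ζ * ζ ^ (a - 1).val := by
    have e1 := AddChar.map_add_eq_mul (AddChar.zmodChar (p ^ r) hζ.pow_eq_one) 1 (a - 1)
    rw [add_sub_cancel] at e1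
    simp only [AddChar.zmodChar_apply] at e1
    rw [h1, e1]
    congr 1
    rw [ZMod.val_one'' (by have := Nat.one_lt_pow (show r ≠ 0 by omega) hp.one_lt; omega), pow_one]
  have h3 : IsPrimitiveRoot (ζ ^ (a - 1).val) (p ^ r) := by
    apply hζ.pow_of_coprime
    rwa [← ZMod.isUnit_iff_coprime, ZMod.natCast_zmod_val]
  obtain ⟨k, rfl⟩ : ∃ k, r = k + 1 := ⟨r - 1, by omega⟩
  have hirr := Polynomial.cyclotomic.irreducible_rat (NeZero.pos (p ^ (k + 1)))
  have h4 := h3.norm_sub_one_of_prime_ne_two hirr hp2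
  have h5 : Algebra.norm ℚ ζ = 1 := by
    refine hζ.norm_eq_one ?_ hirr
    intro h
    have := (Nat.prime_dvd_prime_iff_eq hp Nat.prime_two).mp (h ▸ dvd_pow_self p (by omega))
    exact hp2 this
  rw [h2, show ζ - ζ * ζ ^ (a - 1).val = ζ * (-1 * (ζ ^ (a - 1).val - 1)) by ring, map_mul, h5,
    map_mul, h4, one_mul, abs_mul, ← map_one (algebraMap ℚ L), ← map_neg, Algebra.norm_algebraMap,
    abs_pow]
  simp

set_option maxHeartbeats 1000000 in
lemma em_discr (p r : ℕ) [NeZero (p ^ r)] (hp : p.Prime) (hp2 : p ≠ 2) (hr : 2 ≤ r)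
    (K L : Type*) [Field K] [NumberField K] [Field L] [NumberField L] [Algebra K L]
    [IsCyclotomicExtension {p ^ r} ℚ L]
    (hun : ∀ h : Gal(L/K), h ≠ 1 →
      IsUnit ((galEquivZMod (p ^ r) L (AlgEquiv.restrictScalarsHom ℚ h) : ZMod (p ^ r)) - 1)) :
    p ^ (p ^ (r - 1) * ((p - 1) * r - 1)) ≤
      p ^ (Nat.card Gal(L/K) - 1) * (discr K).natAbs ^ (Nat.card Gal(L/K)) := by
  classical
  have : Fact p.Prime := ⟨hp⟩
  have : IsGalois ℚ L := IsCyclotomicExtension.isGalois {p ^ r} ℚ L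
  have : IsGalois K L := IsGalois.tower_top_of_isGalois ℚ K L
  have hζ := IsCyclotomicExtension.zeta_spec (p ^ r) ℚ L
  set ζ := IsCyclotomicExtension.zeta (p ^ r) ℚ L
  have hm := IsGalois.card_aut_eq_finrank K L
  have hd := natAbs_discr_eq_absNorm_differentIdeal_mul_natAbs_discr_pow K (𝓞 K) L (𝓞 L)
  rw [IsCyclotomicExtension.Rat.discr_prime_pow p r L, Int.natAbs_mul, Int.natAbs_pow,
    Int.natAbs_pow] at hd
  simp only [Int.natAbs_neg, Int.natAbs_one, one_pow, one_mul, Int.natAbs_natCast] at hd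
  rw [hd, hm]
  refine Nat.mul_le_mul_right _ ?_
  set x : 𝓞 L := hζ.toInteger with hx
  have hxL : algebraMap (𝓞 L) L x = ζ := rfl
  have hint : IsIntegral K ζ := Algebra.IsIntegral.isIntegral ζ
  have hadj : Algebra.adjoin K {ζ} = ⊤ := by
    have h1 : Algebra.adjoin ℚ {ζ} = ⊤ := IsCyclotomicExtension.adjoin_primitive_root_eq_top hζ
    have h2 : Algebra.adjoin ℚ {ζ} ≤ (Algebra.adjoin K {ζ}).restrictScalars ℚ :=
      Algebra.adjoin_le Algebra.subset_adjoin
    rw [h1] at h2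
    rw [eq_top_iff]
    intro y _
    exact h2 (show y ∈ (⊤ : Subalgebra ℚ L) from trivial)
  have hmem := aeval_derivative_mem_differentIdeal (𝓞 K) K L x hadj
  set d := aeval x (derivative (minpoly (𝓞 K) x)) with hdd
  have hnorm : |Algebra.norm ℚ (algebraMap (𝓞 L) L d)| = (p : ℚ) ^ (Module.finrank K L - 1) := by
    have hmp := minpoly.isIntegrallyClosed_eq_field_fractions (R := 𝓞 K) (S := 𝓞 L) K L
      (s := x) (Algebra.IsIntegral.isIntegral x)
    rw [hxL] at hmp
    set f := (minpoly K ζ).map (algebraMap K L) with hf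
    have hdL : algebraMap (𝓞 L) L d = eval ζ (derivative f) := by
      rw [hdd, ← aeval_algebraMap_apply, hxL, hf, hmp, derivative_map, derivative_map, eval_map_algebraMap, aeval_map_algebraMap]
    have hspl : f.Splits := (inferInstance : Normal K L).splits ζ
    have hmon : f.Monic := (minpoly.monic hint).map _
    have hsep : f.Separable := Polynomial.Separable.map (show (minpoly K ζ).Separable from IsGalois.separable K ζ)
    have hroot : ζ ∈ f.roots := by
      rw [mem_roots hmon.ne_zero, IsRoot, hf, eval_map_algebraMap, minpoly.aeval]
    rw [hdL, hspl.eval_root_derivative hmon hroot, map_multiset_prod]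
    have hc : (f.roots.erase ζ).card = Module.finrank K L - 1 := by
      rw [Multiset.card_erase_of_mem hroot, ← hspl.natDegree_eq_card_roots, hf, natDegree_map,
        Nat.pred_eq_sub_one]
      congr 1
      apply (Field.primitive_element_iff_minpoly_natDegree_eq K ζ).mp
      apply IntermediateField.adjoin_eq_top_of_algebra
      exact hadj
    rw [← hc, Multiset.map_map]
    have habs := map_multiset_prod (absHom : ℚ →*₀ ℚ)
      (Multiset.map (⇑(Algebra.norm ℚ) ∘ fun x => ζ - x) (f.roots.erase ζ))
    rw [Multiset.map_map] at habs
    refine habs.trans ?_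
    rw [← Multiset.prod_replicate, ← Multiset.map_const']
    refine congrArg Multiset.prod (Multiset.map_congr rfl ?_)
    intro β hβ
    rw [(nodup_roots hsep).mem_erase_iff] at hβ
    have hβ2 : aeval β (minpoly K ζ) = 0 := by
      have := hβ.2
      rwa [mem_roots hmon.ne_zero, IsRoot, hf, eval_map_algebraMap] at this
    obtain ⟨h, rfl⟩ := minpoly.exists_algEquiv_of_root' hint.isAlgebraic hβ2
    have hh : h ≠ 1 := by rintro rfl; exact hβ.1 rfl
    have e := em_norm_sub p r hp hp2 hr L ζ hζ _ (hun h hh)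
    have e2 : (AlgEquiv.restrictScalarsHom ℚ h) ζ = h ζ := rfl
    rw [e2] at e
    simp only [Function.comp_apply]
    exact e
  have h1 : Ideal.absNorm (differentIdeal (𝓞 K) (𝓞 L)) ∣ Ideal.absNorm (Ideal.span {d}) :=
    Ideal.absNorm_dvd_absNorm_of_le ((Ideal.span_singleton_le_iff_mem _).mpr hmem)
  rw [Ideal.absNorm_span_singleton] at h1
  have h2 : (Algebra.norm ℤ d).natAbs = p ^ (Module.finrank K L - 1) := by
    have := Algebra.coe_norm_int d
    have h3 : ((Algebra.norm ℤ d).natAbs : ℚ) = (p : ℚ) ^ (Module.finrank K L - 1) := by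
      rw [← hnorm, Nat.cast_natAbs, Int.cast_abs, this]
    exact_mod_cast h3
  rw [h2] at h1
  exact Nat.le_of_dvd (pow_pos hp.pos _) h1

end

section
open NumberField IsCyclotomicExtension.Rat

lemma em_amgm {ι : Type*} [Fintype ι] [Nonempty ι] (z : ι → ℝ) (hz : ∀ i, 0 ≤ z i) (B : ℝ)
    (h : ∑ i, z i ≤ Fintype.card ι * B) : ∏ i, z i ≤ B ^ Fintype.card ι := by
  have hc : (0 : ℝ) < Fintype.card ι := by exact_mod_cast Fintype.card_pos
  have h1 := Real.geom_mean_le_arith_mean Finset.univ (fun _ : ι => (1 : ℝ)) z (by simp)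
    (by simpa using hc) (fun i _ => hz i)
  simp only [Real.rpow_one, Finset.sum_const, Finset.card_univ, nsmul_eq_mul, mul_one, one_mul] at h1
  have h2 : (∏ i, z i) ^ (Fintype.card ι : ℝ)⁻¹ ≤ B :=
    h1.trans (by rw [div_le_iff₀ hc]; linarith)
  have h0 : 0 ≤ ∏ i, z i := Finset.prod_nonneg (fun i _ => hz i)
  calc ∏ i, z i = ((∏ i, z i) ^ (Fintype.card ι : ℝ)⁻¹) ^ Fintype.card ι := by
        rw [Real.rpow_inv_natCast_pow h0 Fintype.card_ne_zero]
    _ ≤ _ := pow_le_pow_left₀ (Real.rpow_nonneg h0 _) h2 _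

lemma em_clear {ι : Type*} [Fintype ι] (c : ι → ℚ) :
    ∃ M : ℕ, 0 < M ∧ ∃ n : ι → ℤ, ∀ a, (M : ℚ) * c a = n a := by
  classical
  refine ⟨∏ a, (c a).den, Finset.prod_pos fun a _ => (c a).den_pos, ?_⟩
  have : ∀ a, ∃ k : ℤ, ((∏ a, (c a).den : ℕ) : ℚ) * c a = k := by
    intro a
    obtain ⟨d, hd⟩ := Finset.dvd_prod_of_mem (fun a => (c a).den) (Finset.mem_univ a)
    refine ⟨d * (c a).num, ?_⟩
    rw [hd]
    push_cast
    rw [← Rat.den_mul_eq_num]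
    ring
  choose n hn using this
  exact ⟨n, hn⟩

lemma em_rep0 (q : ℕ) [NeZero q] (L : Type*) [Field L] [NumberField L]
    [IsCyclotomicExtension {q} ℚ L] (ζ : L) (hζ : IsPrimitiveRoot ζ q) (z : L) :
    ∃ M : ℕ, 0 < M ∧ ∃ n : ZMod q → ℤ,
      (M : L) * z = ∑ a, (n a : L) * AddChar.zmodChar q hζ.pow_eq_one a := by
  have h1 : Algebra.adjoin ℚ {ζ} = ⊤ := IsCyclotomicExtension.adjoin_primitive_root_eq_top hζ
  have hz : z ∈ Submodule.span ℚ (Set.range (AddChar.zmodChar q hζ.pow_eq_one)) := by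
    have h2 : z ∈ (Algebra.adjoin ℚ {ζ}).toSubmodule := by rw [h1]; trivial
    rw [Algebra.adjoin_eq_span] at h2
    refine Submodule.span_mono ?_ h2
    intro y hy
    obtain ⟨k, rfl⟩ := Submonoid.mem_closure_singleton.mp hy
    exact ⟨(k : ZMod q), by rw [AddChar.zmodChar_apply']⟩
  obtain ⟨c, hc⟩ := (Submodule.mem_span_range_iff_exists_fun ℚ).mp hz
  obtain ⟨M, hM, n, hn⟩ := em_clear c
  refine ⟨M, hM, n, ?_⟩
  rw [← hc, Finset.mul_sum]
  refine Finset.sum_congr rfl fun a _ => ?_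
  rw [Algebra.smul_def, ← mul_assoc]
  congr 1
  have := congrArg (algebraMap ℚ L) (hn a)
  simpa using this

lemma em_gal_char (q : ℕ) [NeZero q] (L : Type*) [Field L] [NumberField L]
    [IsCyclotomicExtension {q} ℚ L] (ζ : L) (hζ : IsPrimitiveRoot ζ q) (g : Gal(L/ℚ)) (a : ZMod q) :
    g (AddChar.zmodChar q hζ.pow_eq_one a) =
      AddChar.zmodChar q hζ.pow_eq_one ((galEquivZMod q L g : ZMod q) * a) := by
  have h1 := galEquivZMod_apply_of_pow_eq q L g hζ.pow_eq_one
  rw [AddChar.zmodChar_apply, map_pow, h1, ← pow_mul, ← AddChar.zmodChar_apply' hζ.pow_eq_one]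
  congr 1
  simp

lemma em_rep (q : ℕ) [NeZero q] (K L : Type*) [Field K] [NumberField K] [Field L] [NumberField L]
    [Algebra K L] [IsCyclotomicExtension {q} ℚ L] (ζ : L) (hζ : IsPrimitiveRoot ζ q) (x : K) :
    ∃ M : ℕ, 0 < M ∧ ∃ n : ZMod q → ℤ,
      (∀ (h : Gal(L/K)) (a : ZMod q),
        n ((galEquivZMod q L (AlgEquiv.restrictScalarsHom ℚ h) : ZMod q) * a) = n a) ∧
      (M : L) * algebraMap K L x = ∑ a, (n a : L) * AddChar.zmodChar q hζ.pow_eq_one a := by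
  classical
  obtain ⟨M, hM, n, hn⟩ := em_rep0 q L ζ hζ (algebraMap K L x)
  have : Fintype Gal(L/K) := Fintype.ofFinite _
  set χ : Gal(L/K) →* (ZMod q)ˣ :=
    (galEquivZMod q L).toMonoidHom.comp (AlgEquiv.restrictScalarsHom ℚ) with hχ
  have hχa : ∀ h : Gal(L/K), galEquivZMod q L (AlgEquiv.restrictScalarsHom ℚ h) = χ h := fun _ => rfl
  refine ⟨Fintype.card Gal(L/K) * M, mul_pos Fintype.card_pos hM,
    fun a => ∑ h : Gal(L/K), n ((χ h : ZMod q) * a), ?_, ?_⟩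
  · intro s a
    rw [hχa]
    refine Fintype.sum_equiv (Equiv.mulRight s) _ _ fun h => ?_
    simp [mul_assoc]
  · have key : ∀ h : Gal(L/K), (M : L) * algebraMap K L x =
        ∑ a, (n ((χ h : ZMod q) * a) : L) * AddChar.zmodChar q hζ.pow_eq_one a := by
      intro h
      have h1 := congrArg (fun t => (h⁻¹ : Gal(L/K)) t) hn
      simp only [map_mul, map_natCast, AlgEquiv.commutes, map_sum, map_intCast] at h1
      rw [h1]
      refine Fintype.sum_equiv (Units.mulLeft (χ h)⁻¹) _ _ fun a => ?_
      have h2 := em_gal_char q L ζ hζ (AlgEquiv.restrictScalarsHom ℚ h⁻¹) a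
      rw [hχa, map_inv χ] at h2
      have h3 : (AlgEquiv.restrictScalarsHom ℚ h⁻¹) (AddChar.zmodChar q hζ.pow_eq_one a) =
        h⁻¹ (AddChar.zmodChar q hζ.pow_eq_one a) := rfl
      rw [← h3, h2]
      simp
    push_cast
    simp_rw [Finset.sum_mul]
    rw [Finset.sum_comm, ← Finset.sum_congr rfl (fun h _ => key h)]
    simp [mul_assoc]

end

section
open NumberField IsCyclotomicExtension.Rat
lemma em_int (q : ℕ) [NeZero q] (hq : 1 < q) (K L : Type*) [Field K] [NumberField K] [Field L] [NumberField L]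
    [Algebra K L] [IsCyclotomicExtension {q} ℚ L] (ζ : L) (hζ : IsPrimitiveRoot ζ q) (x : K)
    (M : ℕ) (n : ZMod q → ℤ)
    (hinv : ∀ (h : Gal(L/K)) (a : ZMod q),
        n ((galEquivZMod q L (AlgEquiv.restrictScalarsHom ℚ h) : ZMod q) * a) = n a)
    (hx : (M : L) * algebraMap K L x = ∑ a, (n a : L) * AddChar.zmodChar q hζ.pow_eq_one a)
    (k : ℤ) :
    ∃ c : 𝓞 K, (M : L) * algebraMap K L (x - c) =
      ∑ a, (((n a - k) % (M : ℤ) : ℤ) : L) * AddChar.zmodChar q hζ.pow_eq_one a := by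
  classical
  have : IsGalois ℚ L := IsCyclotomicExtension.isGalois {q} ℚ L
  have : IsGalois K L := IsGalois.tower_top_of_isGalois ℚ K L
  set ψ := AddChar.zmodChar q hζ.pow_eq_one with hψ
  set cL : L := ∑ a, (((n a - k) / (M : ℤ) : ℤ) : L) * ψ a with hcL
  have hsum : ∑ a, ψ a = 0 := by
    refine AddChar.sum_eq_zero_of_ne_one ?_
    intro h
    have h1 : ψ ((1 : ℕ) : ZMod q) = 1 := by rw [h]; rfl
    rw [hψ, AddChar.zmodChar_apply' hζ.pow_eq_one, pow_one] at h1
    exact hζ.ne_one hq h1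
  have hfix : ∀ h : Gal(L/K), h cL = cL := by
    intro h
    rw [hcL]
    simp only [map_sum, map_mul, map_intCast]
    refine Fintype.sum_equiv
      (Units.mulLeft (galEquivZMod q L (AlgEquiv.restrictScalarsHom ℚ h))) _ _ fun a => ?_
    have h2 := em_gal_char q L ζ hζ (AlgEquiv.restrictScalarsHom ℚ h) a
    have h3 : (AlgEquiv.restrictScalarsHom ℚ h) (ψ a) = h (ψ a) := rfl
    rw [← h3, h2, Units.mulLeft_apply, hinv]
  obtain ⟨c0, hc0⟩ := (IsGalois.mem_range_algebraMap_iff_fixed cL).mpr hfix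
  have hψi : ∀ a, IsIntegral ℤ (ψ a) := by
    intro a
    rw [hψ, AddChar.zmodChar_apply]
    exact (hζ.isIntegral (NeZero.pos q)).pow _
  have hci : IsIntegral ℤ cL := by
    refine IsIntegral.sum _ fun a _ => IsIntegral.mul ?_ (hψi a)
    exact_mod_cast isIntegral_algebraMap (R := ℤ) (A := L)
  have hc0i : IsIntegral ℤ c0 := by
    rw [← hc0] at hci
    exact (isIntegral_algebraMap_iff (algebraMap K L).injective).mp hci
  obtain ⟨c, hc⟩ : ∃ c : 𝓞 K, (c : K) = c0 := ⟨⟨c0, hc0i⟩, rfl⟩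
  refine ⟨c, ?_⟩
  have e : algebraMap K L (x - (c : K)) = algebraMap K L x - cL := by
    rw [map_sub, hc, hc0]
  rw [e, mul_sub, hx, hcL, Finset.mul_sum, ← Finset.sum_sub_distrib]
  rw [← sub_eq_zero, ← Finset.sum_sub_distrib]
  have : ∀ a, (n a : L) * ψ a - (M : L) * ((((n a - k) / (M : ℤ) : ℤ) : L) * ψ a)
      - (((n a - k) % (M : ℤ) : ℤ) : L) * ψ a = (k : L) * ψ a := by
    intro a
    have h1 := congrArg (Int.cast : ℤ → L) (Int.emod_add_mul_ediv (n a - k) (M : ℤ))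
    push_cast at h1
    linear_combination (-ψ a) * h1
  rw [Finset.sum_congr rfl (fun a _ => this a), ← Finset.mul_sum, hsum, mul_zero]

end

section
open NumberField IsCyclotomicExtension.Rat

lemma em_main (p r : ℕ) [NeZero (p ^ r)] (hp : p.Prime) (hr : 2 ≤ r)
    (K L : Type*) [Field K] [NumberField K] [Field L] [NumberField L] [Algebra K L]
    [IsCyclotomicExtension {p ^ r} ℚ L]
    (hun : ∀ h : Gal(L/K), h ≠ 1 →
      IsUnit ((galEquivZMod (p ^ r) L (AlgEquiv.restrictScalarsHom ℚ h) : ZMod (p ^ r)) - 1))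
    (x : K) :
    ∃ c : 𝓞 K, |((Algebra.norm ℚ (x - (c : K)) : ℚ) : ℝ)| ^ (2 * Nat.card Gal(L/K)) ≤
      (((p : ℝ) ^ r - (Nat.card Gal(L/K) - 1 : ℕ)) / 8) ^ (p ^ (r - 1) * (p - 1)) := by
  classical
  have : Fact p.Prime := ⟨hp⟩
  have : IsGalois ℚ L := IsCyclotomicExtension.isGalois {p ^ r} ℚ L
  have : IsGalois K L := IsGalois.tower_top_of_isGalois ℚ K L
  have : Fintype Gal(L/K) := Fintype.ofFinite _
  have hq : 1 < p ^ r := Nat.one_lt_pow (by omega) hp.one_lt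
  have hζ := IsCyclotomicExtension.zeta_spec (p ^ r) ℚ L
  set ζ := IsCyclotomicExtension.zeta (p ^ r) ℚ L
  obtain ⟨M, hM, n, hinv, hx⟩ := em_rep (p ^ r) K L ζ hζ x
  set χ : Gal(L/K) →* (ZMod (p ^ r))ˣ :=
    (galEquivZMod (p ^ r) L).toMonoidHom.comp (AlgEquiv.restrictScalarsHom ℚ) with hχ
  have hχa : ∀ h : Gal(L/K), galEquivZMod (p ^ r) L (AlgEquiv.restrictScalarsHom ℚ h) = χ h :=
    fun _ => rfl
  have hχi : Function.Injective χ :=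
    (galEquivZMod (p ^ r) L).injective.comp (AlgEquiv.restrictScalarsHom_injective ℚ)
  -- the counting bound
  set S : Finset (ZMod (p ^ r)) := Finset.univ.image (fun h : Gal(L/K) => (χ h : ZMod (p ^ r))) with hSdef
  have hScard : S.card = Nat.card Gal(L/K) := by
    have hinj : Function.Injective (fun h : Gal(L/K) => (χ h : ZMod (p ^ r))) :=
      Units.val_injective.comp hχi
    rw [hSdef, Finset.card_image_of_injective _ hinj, Finset.card_univ,
      Nat.card_eq_fintype_card]
  have hcount := em_count p r hp (by omega) n S (by rw [← Finset.card_pos, hScard]; exact Nat.card_pos)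
    (by
      intro s hs a
      obtain ⟨h, _, rfl⟩ := Finset.mem_image.mp hs
      exact hinv h a)
    (by
      intro s hs t ht hst
      obtain ⟨h, _, rfl⟩ := Finset.mem_image.mp hs
      obtain ⟨k, _, rfl⟩ := Finset.mem_image.mp ht
      have h1 : k⁻¹ * h ≠ 1 := by
        intro h1
        apply hst
        rw [inv_mul_eq_one.mp h1]
      have h2 := hun _ h1
      rw [hχa] at h2
      have h3 := (χ k).isUnit.mul h2
      rw [mul_sub, mul_one, ← Units.val_mul, ← map_mul, mul_inv_cancel_left] at h3
      exact h3)
  rw [hScard] at hcount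
  obtain ⟨k, hk⟩ := em_avg (Finset.univ.filter
    (fun y : ZMod (p ^ r) × ZMod (p ^ r) => (p : ZMod (p ^ r)) * (y.2 - y.1) = 0))
    (fun y => n y.1) (fun y => n y.2) M hM
  rw [Finset.filter_filter] at hk
  obtain ⟨c, hc⟩ := em_int (p ^ r) hq K L ζ hζ x M n hinv hx k
  refine ⟨c, ?_⟩
  set ψL := AddChar.zmodChar (p ^ r) hζ.pow_eq_one with hψL
  set w : K := x - (c : K) with hw
  obtain ⟨σ⟩ : Nonempty (L →+* ℂ) := inferInstance
  set ψ : AddChar (ZMod (p ^ r)) ℂ := AddChar.zmodChar (p ^ r) (hζ.map_of_injective σ.injective).pow_eq_one with hψ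
  have hψp : ψ.IsPrimitive :=
    AddChar.zmodChar_primitive_of_primitive_root (p ^ r) (hζ.map_of_injective σ.injective)
  have hσψ : ∀ a, σ (ψL a) = ψ a := by
    intro a
    rw [hψL, hψ, AddChar.zmodChar_apply, AddChar.zmodChar_apply, map_pow]
  set y : ZMod (p ^ r) → ℝ := fun a => (((n a - k) % (M : ℤ) : ℤ) : ℝ) with hy
  have htr := em_trace_form p r hp (by omega) ψ hψp y
  set W := algebraMap K L w with hW
  have hgw : ∀ g : Gal(L/ℚ), (M : ℂ) * σ (g W) =
      ∑ a, (y a : ℂ) * ψ ((galEquivZMod (p ^ r) L g : ZMod (p ^ r)) * a) := by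
    intro g
    have h1 := congrArg (fun t => σ (g t)) hc
    simp only [map_mul, map_natCast, map_sum, map_intCast] at h1
    rw [h1]
    refine Finset.sum_congr rfl fun a _ => ?_
    rw [em_gal_char (p ^ r) L ζ hζ g a, hσψ, hy]
    simp
  have hsum1 : ∑ g : Gal(L/ℚ), ‖(M : ℂ) * σ (g W)‖ ^ 2 =
      ∑ u : (ZMod (p ^ r))ˣ, ‖∑ a, (y a : ℂ) * ψ ((u : ZMod (p ^ r)) * a)‖ ^ 2 := by
    refine Fintype.sum_equiv (galEquivZMod (p ^ r) L).toEquiv _ _ fun g => ?_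
    rw [hgw]; rfl
  have hM0 : (0 : ℝ) < M := by exact_mod_cast hM
  have hcard : Fintype.card Gal(L/ℚ) = p ^ (r - 1) * (p - 1) := by
    rw [← Nat.card_eq_fintype_card, IsGalois.card_aut_eq_finrank, IsCyclotomicExtension.Rat.finrank (p ^ r) L,
      Nat.totient_prime_pow hp (by omega)]
  have hsum2 : ∑ g : Gal(L/ℚ), ‖σ (g W)‖ ^ 2 ≤
      (Fintype.card Gal(L/ℚ) : ℝ) * (((p : ℝ) ^ r - (Nat.card Gal(L/K) - 1 : ℕ)) / 8) := by
    have e1 : ∑ g : Gal(L/ℚ), ‖(M : ℂ) * σ (g W)‖ ^ 2 = (M : ℝ) ^ 2 * ∑ g : Gal(L/ℚ), ‖σ (g W)‖ ^ 2 := by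
      rw [Finset.mul_sum]
      refine Finset.sum_congr rfl fun g _ => ?_
      rw [norm_mul, mul_pow, Complex.norm_natCast]
    rw [e1] at hsum1
    rw [htr, ← Finset.sum_product', ← Finset.sum_filter, Finset.univ_product_univ] at hsum1
    set C := ((Finset.univ.filter (fun y : ZMod (p ^ r) × ZMod (p ^ r) =>
      (p : ZMod (p ^ r)) * (y.2 - y.1) = 0 ∧ n y.1 ≠ n y.2)).card : ℕ) with hC
    have hC2 : (C : ℝ) ≤ ((p - 1 : ℕ) : ℝ) * ((p : ℝ) ^ r - (Nat.card Gal(L/K) - 1 : ℕ)) := by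
      have : ((C + (p - 1) * (Nat.card Gal(L/K) - 1) : ℕ) : ℝ) ≤ (((p - 1) * p ^ r : ℕ) : ℝ) :=
        Nat.cast_le.mpr hcount
      rw [Nat.cast_add, Nat.cast_mul, Nat.cast_mul, Nat.cast_pow] at this
      rw [mul_sub]; linarith
    have hN : (0 : ℝ) ≤ (p : ℝ) ^ (r - 1) / 2 := by positivity
    have h5 := mul_le_mul_of_nonneg_left hk hN
    rw [← hsum1] at h5
    have h6 : (p : ℝ) ^ (r - 1) / 2 * ((C : ℝ) * ((M : ℝ) ^ 2 / 4)) ≤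
        (M : ℝ) ^ 2 * ((Fintype.card Gal(L/ℚ) : ℝ) *
          (((p : ℝ) ^ r - (Nat.card Gal(L/K) - 1 : ℕ)) / 8)) := by
      rw [hcard, Nat.cast_mul, Nat.cast_pow]
      have := mul_le_mul_of_nonneg_left hC2 (show (0 : ℝ) ≤ (p : ℝ) ^ (r - 1) * (M : ℝ) ^ 2 / 8 by positivity)
      linarith
    exact le_of_mul_le_mul_left (h5.trans h6) (by positivity)
  have ham := em_amgm (fun g : Gal(L/ℚ) => ‖σ (g W)‖ ^ 2) (fun g => by positivity) _ hsum2
  rw [hcard] at ham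
  refine le_trans (le_of_eq ?_) ham
  rw [Finset.prod_pow, ← norm_prod, ← map_prod, ← Algebra.norm_eq_prod_automorphisms ℚ W,
    ← Algebra.norm_norm (S := K) (a := W), hW, Algebra.norm_algebraMap, map_pow, ← IsGalois.card_aut_eq_finrank]
  rw [map_pow, map_pow, norm_pow, ← pow_mul, mul_comm]
  congr 1
  simp

end

section

lemma em_final (p r m u n : ℕ) (hp : p.Prime) (hodd : Odd p) (hr : 2 ≤ r) (hu : u ≤ p - 2)
    (hm : 0 < m) (hnm : n * m = p ^ (r - 1) * (p - 1)) (T D : ℝ) (hT : 0 ≤ T) (hD : 0 ≤ D)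
    (h1 : T ^ (2 * m) ≤ (((p : ℝ) ^ r - u) / 8) ^ (p ^ (r - 1) * (p - 1)))
    (h2 : (p : ℝ) ^ (p ^ (r - 1) * ((p - 1) * r - 1)) ≤ (p : ℝ) ^ u * D ^ m) :
    T ≤ ((3 : ℝ) ^ (-(2 : ℝ) / 3)) ^ n * Real.sqrt D := by
  have hnum := em_num p r u hp hodd hr hu
  have hpp : (0 : ℝ) < p := by exact_mod_cast hp.pos
  have hpr : p ≤ p ^ r := Nat.le_self_pow (by omega) p
  set φ := p ^ (r - 1) * (p - 1) with hφ
  have hnum' : ((p : ℝ) ^ r - u) ^ (3 * φ) * 81 ^ φ * (p : ℝ) ^ (3 * (u + p ^ (r - 1))) ≤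
      512 ^ φ * (p : ℝ) ^ (3 * r * φ) := by
    have : (((p ^ r - u) ^ (3 * φ) * 81 ^ φ * p ^ (3 * (u + p ^ (r - 1))) : ℕ) : ℝ) ≤
      ((512 ^ φ * p ^ (3 * r * φ) : ℕ) : ℝ) := Nat.cast_le.mpr hnum
    have hle : u ≤ p ^ r := by omega
    push_cast [Nat.cast_sub hle] at this
    exact this
  have hexp : 3 * r * φ = 3 * (p ^ (r - 1) * ((p - 1) * r - 1)) + 3 * p ^ (r - 1) := by
    have : (p - 1) * r = ((p - 1) * r - 1) + 1 := by
      have : 0 < (p - 1) * r := mul_pos (by have := hp.two_le; omega) (by omega)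
      omega
    calc 3 * r * φ = 3 * (p ^ (r - 1) * ((p - 1) * r)) := by rw [hφ]; ring
      _ = _ := by rw [this]; simp only [Nat.add_sub_cancel]; ring
  have h3 : (p : ℝ) ^ (3 * r * φ) ≤ (p : ℝ) ^ (3 * (u + p ^ (r - 1))) * D ^ (3 * m) := by
    have := pow_le_pow_left₀ (by positivity) h2 3
    rw [hexp, pow_add]
    calc (p : ℝ) ^ (3 * (p ^ (r - 1) * ((p - 1) * r - 1))) * (p : ℝ) ^ (3 * p ^ (r - 1))
        = ((p : ℝ) ^ (p ^ (r - 1) * ((p - 1) * r - 1))) ^ 3 * (p : ℝ) ^ (3 * p ^ (r - 1)) := by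
          rw [← pow_mul]; ring_nf
      _ ≤ ((p : ℝ) ^ u * D ^ m) ^ 3 * (p : ℝ) ^ (3 * p ^ (r - 1)) :=
          mul_le_mul_of_nonneg_right this (by positivity)
      _ = _ := by
          rw [mul_pow, ← pow_mul, ← pow_mul, mul_add, pow_add, mul_comm u 3, mul_comm m 3]; ring
  have h4 : ((p : ℝ) ^ r - u) ^ (3 * φ) * 81 ^ φ ≤ 512 ^ φ * D ^ (3 * m) := by
    refine le_of_mul_le_mul_right (hnum'.trans ?_) (pow_pos hpp (3 * (u + p ^ (r - 1))))
    have := mul_le_mul_of_nonneg_left h3 (show (0 : ℝ) ≤ 512 ^ φ by positivity)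
    linarith
  have h5 : T ^ (6 * m) ≤ D ^ (3 * m) / 81 ^ φ := by
    have h6 := pow_le_pow_left₀ (by positivity) h1 3
    rw [← pow_mul, ← pow_mul] at h6
    rw [show 6 * m = 2 * m * 3 by ring]
    refine h6.trans ?_
    rw [mul_comm φ 3, div_pow, div_le_div_iff₀ (by positivity) (by positivity)]
    rw [show (8 : ℝ) ^ (3 * φ) = 512 ^ φ by rw [pow_mul]; norm_num]
    linarith
  have h7 : (((3 : ℝ) ^ (-(2 : ℝ) / 3)) ^ n * Real.sqrt D) ^ (6 * m) = D ^ (3 * m) / 81 ^ φ := by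
    rw [mul_pow]
    have e1 : Real.sqrt D ^ (6 * m) = D ^ (3 * m) := by
      rw [show 6 * m = 2 * (3 * m) by ring, pow_mul, Real.sq_sqrt hD]
    have e0 : ((3 : ℝ) ^ (-(2 : ℝ) / 3)) ^ 6 = 81⁻¹ := by
      rw [← Real.rpow_natCast, ← Real.rpow_mul (by norm_num)]
      rw [show (-(2 : ℝ) / 3 * ((6 : ℕ) : ℝ)) = -((4 : ℕ) : ℝ) by norm_num, Real.rpow_neg (by norm_num), Real.rpow_natCast]
      norm_num
    rw [e1, ← pow_mul, show n * (6 * m) = 6 * (n * m) by ring, pow_mul, e0, hnm, inv_pow]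
    rw [div_eq_inv_mul]
  rw [← h7] at h5
  exact le_of_pow_le_pow_left₀ (by omega) (by positivity) h5

theorem euclideanMinimum_le_of_oddPrimePower_conductor_sq
    (p r : ℕ) (hp : p.Prime) (hodd : Odd p) (hr : 2 ≤ r)
    (K : Type*) [Field K] [NumberField K]
    (hcond : HasConductor K ⟨p ^ r, pow_pos hp.pos r⟩) :
    euclideanMinimum K ≤
      ((3 : ℝ) ^ (-(2 : ℝ) / 3)) ^ (Module.finrank ℚ K) *
        Real.sqrt |(NumberField.discr K : ℝ)| := by
  have hne : NeZero (p ^ r) := ⟨(pow_pos hp.pos r).ne'⟩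
  have : Fact p.Prime := ⟨hp⟩
  have hp2 : p ≠ 2 := by rintro rfl; revert hodd; decide
  obtain ⟨⟨f⟩, hmin⟩ := hcond
  have hcyc : IsCyclotomicExtension {p ^ r} ℚ (CyclotomicField (p ^ r) ℚ) := em_cyc (p ^ r)
  let L := CyclotomicField (p ^ r) ℚ
  let f2 : K →+* L := f.toRingHom
  let : Algebra K L := f2.toAlgebra
  have hK : ¬ Nonempty (K →ₐ[ℚ] CyclotomicField (p ^ (r - 1)) ℚ) := by
    intro h
    have h1 := hmin ⟨p ^ (r - 1), pow_pos hp.pos _⟩ h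
    have h2 : p ^ r ≤ p ^ (r - 1) := h1
    exact absurd h2 (not_le.mpr (Nat.pow_lt_pow_right hp.one_lt (by omega)))
  have hcycL : IsCyclotomicExtension {p ^ r} ℚ L := hcyc
  have hnd : ¬ p ∣ Nat.card Gal(L/K) := em_not_dvd p r hp hodd hr K L hK
  have hun : ∀ h : Gal(L/K), h ≠ 1 →
      IsUnit ((IsCyclotomicExtension.Rat.galEquivZMod (p ^ r) L
        (AlgEquiv.restrictScalarsHom ℚ h) : ZMod (p ^ r)) - 1) := by
    intro h hh
    exact em_unit p r hp hr Gal(L/K)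
      ((IsCyclotomicExtension.Rat.galEquivZMod (p ^ r) L).toMonoidHom.comp (AlgEquiv.restrictScalarsHom ℚ))
      ((IsCyclotomicExtension.Rat.galEquivZMod (p ^ r) L).injective.comp
        (AlgEquiv.restrictScalarsHom_injective ℚ)) hnd h hh
  have hdisc := em_discr p r hp hp2 hr K L hun
  have : IsGalois ℚ L := IsCyclotomicExtension.isGalois {p ^ r} ℚ L
  have : IsGalois K L := IsGalois.tower_top_of_isGalois ℚ K L
  have hnm : Module.finrank ℚ K * Nat.card Gal(L/K) = p ^ (r - 1) * (p - 1) := by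
    rw [IsGalois.card_aut_eq_finrank, Module.finrank_mul_finrank,
      IsCyclotomicExtension.Rat.finrank (p ^ r) L, Nat.totient_prime_pow hp (by omega)]
  have hu : Nat.card Gal(L/K) - 1 ≤ p - 2 := by
    have h1 : Nat.card Gal(L/K) ∣ p ^ (r - 1) * (p - 1) := ⟨_, by rw [← hnm, mul_comm]⟩
    have h2 : Nat.Coprime (Nat.card Gal(L/K)) (p ^ (r - 1)) :=
      (Nat.Coprime.pow_left _ ((hp.coprime_iff_not_dvd).mpr hnd)).symm
    have h3 := Nat.le_of_dvd (by have := hp.two_le; omega) (h2.dvd_of_dvd_mul_left h1)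
    omega
  unfold euclideanMinimum
  refine ciSup_le fun x => ?_
  obtain ⟨c, hc⟩ := em_main p r hp hr K L hun x
  refine (ciInf_le ⟨0, ?_⟩ c).trans ?_
  · rintro _ ⟨d, rfl⟩
    exact abs_nonneg _
  refine em_final p r (Nat.card Gal(L/K)) (Nat.card Gal(L/K) - 1) _ hp hodd hr hu Nat.card_pos hnm _ _
    (abs_nonneg _) (abs_nonneg _) hc ?_
  have h1 : ((p ^ (p ^ (r - 1) * ((p - 1) * r - 1)) : ℕ) : ℝ) ≤
    ((p ^ (Nat.card Gal(L/K) - 1) * (discr K).natAbs ^ (Nat.card Gal(L/K)) : ℕ) : ℝ) :=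
    Nat.cast_le.mpr hdisc
  rw [Nat.cast_mul, Nat.cast_pow, Nat.cast_pow, Nat.cast_pow, Nat.cast_natAbs, Int.cast_abs] at h1
  exact h1

end
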